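/- Let X be a compact topological space and F ⊆ C(X, ℝ) a uniformly bounded set of continuous real-valued functions on X. The following are equivalent: (1) no sequence of functions from F is an l₁-sequence; (2) F is tame, i.e. no sequence of functions from F is independent; (3) every sequence in F has a subsequence converging pointwise on X to some function X → ℝ; (4) every function in the closure of F in ℝ^X with the topology of pointwise convergence is fragmented; (5) F is eventually fragmented, i.e. every sequence in F has a subsequence which, as a family, is a fragmented family on X. -/

import Mathlib

open Filter

/-- A sequence `(f n)` of real-valued functions on `Z` is *independent* if there are
reals `a < b` such that for all disjoint finite sets `P, M ⊆ ℕ` the set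
`⋂_{n ∈ P} {f n < a} ∩ ⋂_{n ∈ M} {f n > b}` is nonempty. -/
def IsIndependentSeq {Z : Type*} (f : ℕ → Z → ℝ) : Prop :=
  ∃ a b : ℝ, a < b ∧ ∀ P M : Finset ℕ, Disjoint P M →
    ((⋂ n ∈ P, {z | f n z < a}) ∩ ⋂ n ∈ M, {z | b < f n z}).Nonempty

/-- A uniformly bounded sequence `(f n)` is an *`l₁`-sequence* if there is `a > 0` with
`a · Σ |cᵢ| ≤ sup_z |Σ cᵢ · fᵢ(z)|` for all `n` and scalars `c₀, …, c_{n-1}`. -/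
def IsL1Seq {Z : Type*} (f : ℕ → Z → ℝ) : Prop :=
  ∃ a : ℝ, 0 < a ∧ ∀ n : ℕ, ∀ c : ℕ → ℝ,
    a * ∑ i ∈ Finset.range n, |c i| ≤ ⨆ z : Z, |∑ i ∈ Finset.range n, c i * f i z|

/-- A real-valued function on a topological space is *fragmented* if every nonempty
subset has a relatively nonempty open trace on which the function is `ε`-small. -/
def IsFragmentedFn {X : Type*} [TopologicalSpace X] (φ : X → ℝ) : Prop :=
  ∀ A : Set X, A.Nonempty → ∀ ε : ℝ, 0 < ε → ∃ O : Set X, IsOpen O ∧ (O ∩ A).Nonempty ∧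
    ∀ x ∈ O ∩ A, ∀ y ∈ O ∩ A, |φ x - φ y| ≤ ε

/-- A family of real-valued functions is a *fragmented family* if the open set can be
chosen simultaneously for all members of the family. -/
def IsFragmentedFamilyR {X : Type*} [TopologicalSpace X] (F : Set (X → ℝ)) : Prop :=
  ∀ A : Set X, A.Nonempty → ∀ ε : ℝ, 0 < ε → ∃ O : Set X, IsOpen O ∧ (O ∩ A).Nonempty ∧
    ∀ f ∈ F, ∀ x ∈ O ∩ A, ∀ y ∈ O ∩ A, |f x - f y| ≤ ε


/-- A finite grid of rational pairs separating far away points of `[-C, C]`. -/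
lemma grid_exists (C ε : ℝ) (hε : 0 < ε) : ∃ T : Finset (ℚ × ℚ), (∀ q ∈ T, q.1 < q.2) ∧
    ∀ s t : ℝ, |s| ≤ C → |t| ≤ C → s + ε ≤ t → ∃ q ∈ T, s < (q.1 : ℝ) ∧ (q.2 : ℝ) < t := by
  classical
  let K : Set (ℝ × ℝ) := (Set.Icc (-C) C ×ˢ Set.Icc (-C) C) ∩ {p | p.1 + ε ≤ p.2}
  have hK : IsCompact K := (isCompact_Icc.prod isCompact_Icc).inter_right
    (isClosed_le (by fun_prop) (by fun_prop))
  let ι := {q : ℚ × ℚ // q.1 < q.2}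
  let U : ι → Set (ℝ × ℝ) := fun q => {p | p.1 < (q.1.1 : ℝ) ∧ (q.1.2 : ℝ) < p.2}
  have hU : ∀ q, IsOpen (U q) := fun q =>
    (isOpen_lt continuous_fst continuous_const).inter (isOpen_lt continuous_const continuous_snd)
  obtain ⟨T, hT⟩ := hK.elim_finite_subcover U hU (by
    rintro ⟨s, t⟩ ⟨_, hst⟩
    have hst' : s < t := by
      have : s + ε ≤ t := hst
      linarith
    obtain ⟨q, hq1, hq2⟩ := exists_rat_btwn hst'
    obtain ⟨r, hr1, hr2⟩ := exists_rat_btwn hq2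
    exact Set.mem_iUnion.2 ⟨⟨(q, r), by exact_mod_cast hr1⟩, hq1, hr2⟩)
  refine ⟨T.image Subtype.val, ?_, ?_⟩
  · intro q hq
    obtain ⟨q', _, rfl⟩ := Finset.mem_image.1 hq
    exact q'.2
  · intro s t hs ht hst
    have := hT (show (s, t) ∈ K from ⟨⟨abs_le.1 hs, abs_le.1 ht⟩, hst⟩)
    simp only [Set.mem_iUnion] at this
    obtain ⟨q, hq, hq'⟩ := this
    exact ⟨q.1, Finset.mem_image_of_mem _ hq, hq'⟩

/-- Finite shrinking lemma. -/
lemma shrink_finset {X ι : Type*} [TopologicalSpace X] (A : Set X)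
    (R : ι → Set X → Prop) (hR : ∀ i O O', O' ⊆ O → R i O → R i O') (T : Finset ι)
    (h : ∀ i ∈ T, ∀ O, IsOpen O → (O ∩ A).Nonempty →
      ∃ O', O' ⊆ O ∧ IsOpen O' ∧ (O' ∩ A).Nonempty ∧ R i O')
    (hA : A.Nonempty) :
    ∃ O, IsOpen O ∧ (O ∩ A).Nonempty ∧ ∀ i ∈ T, R i O := by
  classical
  induction T using Finset.induction_on with
  | empty => exact ⟨Set.univ, isOpen_univ, by simpa using hA, by simp⟩
  | insert i T hi ih =>
    obtain ⟨O, hO, hOA, hOT⟩ := ih (fun j hj => h j (Finset.mem_insert_of_mem hj))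
    obtain ⟨O', hO'O, hO', hO'A, hRi⟩ := h i (Finset.mem_insert_self _ _) O hO hOA
    refine ⟨O', hO', hO'A, ?_⟩
    intro j hj
    rcases Finset.mem_insert.1 hj with rfl | hj
    · exact hRi
    · exact hR _ _ _ hO'O (hOT j hj)

/-- Tree construction of an independent sequence. -/
lemma tree_independent {X : Type*} [TopologicalSpace X] (G : Set (X → ℝ))
    (hG : ∀ f ∈ G, Continuous f) (A : Set X) (hA : A.Nonempty) (a b : ℝ) (hab : a < b)
    (h : ∀ S : Set (Set X), S.Finite → (∀ O ∈ S, IsOpen O ∧ (O ∩ A).Nonempty) →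
      ∃ f ∈ G, ∀ O ∈ S, (∃ x ∈ O ∩ A, f x < a) ∧ (∃ x ∈ O ∩ A, b < f x)) :
    ∃ f : ℕ → X → ℝ, (∀ n, f n ∈ G) ∧ IsIndependentSeq f := by
  classical
  let St := {S : Set (Set X) // S.Finite ∧ ∀ O ∈ S, IsOpen O ∧ (O ∩ A).Nonempty}
  have h' : ∀ S : St, ∃ f ∈ G, ∀ O ∈ S.1,
      (∃ x ∈ O ∩ A, f x < a) ∧ (∃ x ∈ O ∩ A, b < f x) := fun S => h S.1 S.2.1 S.2.2
  choose F hFG hF using h'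
  let next : St → St := fun S =>
    ⟨((fun O => O ∩ {x | F S x < a}) '' S.1) ∪ ((fun O => O ∩ {x | b < F S x}) '' S.1),
      (S.2.1.image _).union (S.2.1.image _), by
        rintro O' (⟨O, hO, rfl⟩ | ⟨O, hO, rfl⟩)
        · obtain ⟨x, hx, hx'⟩ := (hF S O hO).1
          exact ⟨(S.2.2 O hO).1.inter (isOpen_lt (hG _ (hFG S)) continuous_const),
            x, ⟨hx.1, hx'⟩, hx.2⟩
        · obtain ⟨x, hx, hx'⟩ := (hF S O hO).2
          exact ⟨(S.2.2 O hO).1.inter (isOpen_lt continuous_const (hG _ (hFG S))),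
            x, ⟨hx.1, hx'⟩, hx.2⟩⟩
  let s0 : St := ⟨{Set.univ}, Set.finite_singleton _, by
    rintro O rfl
    exact ⟨isOpen_univ, by simpa using hA⟩⟩
  let s : ℕ → St := fun n => Nat.rec s0 (fun _ S => next S) n
  have hs : ∀ n, s (n + 1) = next (s n) := fun n => rfl
  refine ⟨fun n => F (s n), fun n => hFG _, a, b, hab, ?_⟩
  have key : ∀ (σ : ℕ → Prop) (n : ℕ), ∃ O ∈ (s n).1, ∀ x ∈ O, ∀ i < n,
      (σ i → F (s i) x < a) ∧ (¬ σ i → b < F (s i) x) := by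
    intro σ n
    induction n with
    | zero => exact ⟨Set.univ, rfl, by simp⟩
    | succ n ih =>
      obtain ⟨O, hO, hOx⟩ := ih
      by_cases hσ : σ n
      · refine ⟨O ∩ {x | F (s n) x < a}, ?_, ?_⟩
        · rw [hs]
          exact Or.inl ⟨O, hO, rfl⟩
        · intro x hx i hi
          rcases Nat.lt_succ_iff_lt_or_eq.1 hi with hi | rfl
          · exact hOx x hx.1 i hi
          · exact ⟨fun _ => hx.2, fun h => absurd hσ h⟩
      · refine ⟨O ∩ {x | b < F (s n) x}, ?_, ?_⟩
        · rw [hs]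
          exact Or.inr ⟨O, hO, rfl⟩
        · intro x hx i hi
          rcases Nat.lt_succ_iff_lt_or_eq.1 hi with hi | rfl
          · exact hOx x hx.1 i hi
          · exact ⟨fun h => absurd h hσ, fun _ => hx.2⟩
  intro P M hPM
  obtain ⟨O, hO, hOx⟩ := key (fun i => i ∈ P) ((P ∪ M).sup id + 1)
  obtain ⟨x, hx, _⟩ := ((s ((P ∪ M).sup id + 1)).2.2 O hO).2
  refine ⟨x, ?_, ?_⟩
  · simp only [Set.mem_iInter]
    intro n hn
    have : n ≤ (P ∪ M).sup id := Finset.le_sup (f := id) (Finset.mem_union_left _ hn)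
    exact (hOx x hx n (by omega)).1 hn
  · simp only [Set.mem_iInter]
    intro n hn
    have : n ≤ (P ∪ M).sup id := Finset.le_sup (f := id) (Finset.mem_union_right _ hn)
    exact (hOx x hx n (by omega)).2 (fun h => Finset.disjoint_left.1 hPM h hn)

/-- (2) → (4). -/
lemma tame_closure_fragmented {X : Type*} [TopologicalSpace X]
    (F : Set (X → ℝ)) (hFcont : ∀ f ∈ F, Continuous f)
    (C : ℝ) (hC : ∀ f ∈ F, ∀ x : X, |f x| ≤ C)
    (h2 : ¬ ∃ f : ℕ → X → ℝ, (∀ n, f n ∈ F) ∧ IsIndependentSeq f) :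
    ∀ g ∈ closure F, IsFragmentedFn g := by
  classical
  intro g hg A hA ε hε
  by_contra hcon
  push Not at hcon
  have hgC : ∀ x, |g x| ≤ C := by
    intro x
    have hcl : IsClosed {h : X → ℝ | |h x| ≤ C} :=
      isClosed_le ((continuous_apply x).abs) continuous_const
    exact closure_minimal (fun f hf => hC f hf x) hcl hg
  obtain ⟨T, hT1, hT⟩ := grid_exists C ε hε
  let R : ℚ × ℚ → Set X → Prop := fun q O =>
    ¬ ((∃ x ∈ O ∩ A, g x < q.1) ∧ ∃ x ∈ O ∩ A, (q.2 : ℝ) < g x)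
  have hR : ∀ i O O', O' ⊆ O → R i O → R i O' := by
    rintro i O O' hO h ⟨⟨x, hx, hx'⟩, ⟨y, hy, hy'⟩⟩
    exact h ⟨⟨x, ⟨hO hx.1, hx.2⟩, hx'⟩, ⟨y, ⟨hO hy.1, hy.2⟩, hy'⟩⟩
  by_cases hsh : ∀ i ∈ T, ∀ O, IsOpen O → (O ∩ A).Nonempty →
      ∃ O', O' ⊆ O ∧ IsOpen O' ∧ (O' ∩ A).Nonempty ∧ R i O'
  · obtain ⟨O, hO, hOA, hOR⟩ := shrink_finset A R hR T hsh hA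
    obtain ⟨x, hx, y, hy, hxy⟩ := hcon O hO hOA
    rcases lt_abs.1 hxy with h | h
    · obtain ⟨q, hq, h1, h2⟩ := hT (g y) (g x) (hgC _) (hgC _) (by linarith)
      exact hOR q hq ⟨⟨y, hy, h1⟩, ⟨x, hx, h2⟩⟩
    · obtain ⟨q, hq, h1, h2⟩ := hT (g x) (g y) (hgC _) (hgC _) (by linarith)
      exact hOR q hq ⟨⟨x, hx, h1⟩, ⟨y, hy, h2⟩⟩
  · push Not at hsh
    obtain ⟨q, hq, O, hO, hOA, hOR⟩ := hsh
    apply h2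
    refine tree_independent F hFcont (O ∩ A) hOA q.1 q.2 (by exact_mod_cast hT1 q hq) ?_
    intro S hS hSO
    have hp : ∀ V ∈ S, (∃ x ∈ V ∩ (O ∩ A), g x < q.1) ∧ ∃ x ∈ V ∩ (O ∩ A), (q.2 : ℝ) < g x := by
      intro V hV
      have := hOR (O ∩ V) Set.inter_subset_left (hO.inter (hSO V hV).1)
        (by
          obtain ⟨x, hx1, hx2, hx3⟩ := (hSO V hV).2
          exact ⟨x, ⟨hx2, hx1⟩, hx3⟩)
      obtain ⟨⟨x, hx, hx'⟩, ⟨y, hy, hy'⟩⟩ := this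
      exact ⟨⟨x, ⟨hx.1.2, hx.1.1, hx.2⟩, hx'⟩, ⟨y, ⟨hy.1.2, hy.1.1, hy.2⟩, hy'⟩⟩
    have : Nonempty X := hA.to_type
    choose! u hu using fun V hV => (hp V hV).1
    choose! w hw using fun V hV => (hp V hV).2
    have hop : IsOpen (⋂ V ∈ S, {h : X → ℝ | h (u V) < q.1 ∧ (q.2 : ℝ) < h (w V)}) := by
      refine hS.isOpen_biInter fun V _ => ?_
      exact (isOpen_lt (continuous_apply _) continuous_const).inter
        (isOpen_lt continuous_const (continuous_apply _))
    obtain ⟨f, hf, hfF⟩ := mem_closure_iff.1 hg _ hop (by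
      simp only [Set.mem_iInter]
      exact fun V hV => ⟨(hu V hV).2, (hw V hV).2⟩)
    simp only [Set.mem_iInter] at hf
    exact ⟨f, hfF, fun V hV => ⟨⟨u V, (hu V hV).1, (hf V hV).1⟩, ⟨w V, (hw V hV).1, (hf V hV).2⟩⟩⟩

/-- Diagonal lemma for infinite subsets of `ℕ` modulo finite sets. -/
lemma diag_lemma (Q : ℕ → Set ℕ → Prop)
    (hQ : ∀ j L L', L'.Infinite → (L' \ L).Finite → Q j L → Q j L')
    (hd : ∀ j (L : Set ℕ), L.Infinite → ∃ L', L' ⊆ L ∧ L'.Infinite ∧ Q j L')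
    (L : Set ℕ) (hL : L.Infinite) : ∃ L', L' ⊆ L ∧ L'.Infinite ∧ ∀ j, Q j L' := by
  classical
  let I := {L : Set ℕ // L.Infinite}
  have hd' : ∀ j (L : I), ∃ L' : I, L'.1 ⊆ L.1 ∧ Q j L'.1 := by
    intro j L
    obtain ⟨L', h1, h2, h3⟩ := hd j L.1 L.2
    exact ⟨⟨L', h2⟩, h1, h3⟩
  choose N hN1 hN2 using hd'
  let s : ℕ → I := fun n => Nat.rec ⟨L, hL⟩ (fun j M => N j M) n
  have hs0 : (s 0).1 = L := rfl
  have hs : ∀ n, s (n + 1) = N n (s n) := fun n => rfl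
  have hanti : Antitone (fun n => (s n).1) := antitone_nat_of_succ_le fun n => by
    rw [hs]; exact hN1 _ _
  have hex : ∀ n m, ∃ k ∈ (s (n + 1)).1, m < k := fun n m => (s (n + 1)).2.exists_gt m
  choose p hp1 hp2 using hex
  let e : ℕ → ℕ := fun n => Nat.rec (p 0 0) (fun j m => p (j + 1) m) n
  have he : ∀ n, e (n + 1) = p (n + 1) (e n) := fun n => rfl
  have hes : StrictMono e := strictMono_nat_of_lt_succ fun n => by
    rw [he]; exact hp2 _ _
  have hem : ∀ n, e n ∈ (s (n + 1)).1 := by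
    intro n
    cases n with
    | zero => exact hp1 _ _
    | succ n => rw [he]; exact hp1 _ _
  refine ⟨Set.range e, ?_, Set.infinite_range_of_injective hes.injective, ?_⟩
  · rintro _ ⟨n, rfl⟩
    exact hanti (Nat.zero_le (n + 1)) (hem n)
  · intro j
    have hQj : Q j (s (j + 1)).1 := by rw [hs]; exact hN2 _ _
    refine hQ j _ _ (Set.infinite_range_of_injective hes.injective) ?_ hQj
    refine ((Set.finite_Iio j).image e).subset ?_
    rintro _ ⟨⟨n, rfl⟩, hn⟩
    refine ⟨n, ?_, rfl⟩
    by_contra hnj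
    have hnj' : j ≤ n := by simpa using hnj
    exact hn (hanti (by omega : j + 1 ≤ n + 1) (hem n))

/-- `A` is a witness for the failure of `(a, b)`-fragmentedness along `L`. -/
def BadSet {X : Type*} [TopologicalSpace X] (f : ℕ → X → ℝ) (a b : ℝ) (L : Set ℕ)
    (A : Set X) : Prop :=
  ∀ O : Set X, IsOpen O → (O ∩ A).Nonempty →
    {n | n ∈ L ∧ (∃ x ∈ O ∩ A, f n x < a) ∧ ∃ y ∈ O ∩ A, b < f n y}.Infinite

lemma BadSet.mono {X : Type*} [TopologicalSpace X] {f : ℕ → X → ℝ} {a b : ℝ} {L L' : Set ℕ}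
    {A : Set X} (h : BadSet f a b L' A) (hL : (L' \ L).Finite) : BadSet f a b L A := by
  intro O hO hOA
  refine ((h O hO hOA).sdiff hL).mono ?_
  rintro n ⟨⟨h1, h2⟩, h3⟩
  refine ⟨?_, h2⟩
  by_contra hn
  exact h3 ⟨h1, hn⟩

lemma badSet_sUnion {X : Type*} [TopologicalSpace X] (f : ℕ → X → ℝ) (a b : ℝ) (L : Set ℕ) :
    BadSet f a b L (⋃₀ {A | BadSet f a b L A}) := by
  rintro O hO ⟨x, hxO, A, hA, hxA⟩
  refine (hA O hO ⟨x, hxO, hxA⟩).mono ?_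
  rintro n ⟨h1, ⟨y, hy, hy'⟩, ⟨z, hz, hz'⟩⟩
  exact ⟨h1, ⟨y, ⟨hy.1, A, hA, hy.2⟩, hy'⟩, ⟨z, ⟨hz.1, A, hA, hz.2⟩, hz'⟩⟩

lemma tame_pair {X : Type*} [TopologicalSpace X] [SecondCountableTopology X]
    (f : ℕ → X → ℝ) (hf : ∀ n, Continuous (f n))
    (h2 : ¬ ∃ g : ℕ → X → ℝ, (∀ n, g n ∈ Set.range f) ∧ IsIndependentSeq g)
    (a b : ℝ) (hab : a < b) (L : Set ℕ) (hL : L.Infinite) :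
    ∃ L', L' ⊆ L ∧ L'.Infinite ∧ ∀ A : Set X, A.Nonempty → ¬ BadSet f a b L' A := by
  classical
  by_contra hcon
  push Not at hcon
  let ker : Set ℕ → Set X := fun L => ⋃₀ {A | BadSet f a b L A}
  have hker : ∀ L L', (L' \ L).Finite → ker L' ⊆ ker L := by
    rintro L L' h x ⟨A, hA, hx⟩
    exact ⟨A, BadSet.mono hA h, hx⟩
  obtain ⟨B, hBc, _, hB⟩ := TopologicalSpace.exists_countable_basis X
  have hBne : (insert ∅ B : Set (Set X)).Nonempty := ⟨∅, by simp⟩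
  obtain ⟨e, he⟩ := (hBc.insert ∅).exists_eq_range hBne
  let Q : ℕ → Set ℕ → Prop := fun j L => (ker L ∩ e j = ∅) ∨
    ∀ L', L'.Infinite → (L' \ L).Finite → (ker L' ∩ e j).Nonempty
  have htr : ∀ L1 L2 L3 : Set ℕ, (L1 \ L2).Finite → (L2 \ L3).Finite → (L1 \ L3).Finite := by
    intro L1 L2 L3 h12 h23
    refine (h12.union h23).subset ?_
    rintro n ⟨h1, h3⟩
    by_cases h : n ∈ L2
    · exact Or.inr ⟨h, h3⟩
    · exact Or.inl ⟨h1, h⟩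
  obtain ⟨M, hML, hM, hMQ⟩ := diag_lemma Q (by
      rintro j L L' hL' hLL (h | h)
      · left
        exact Set.subset_empty_iff.1 (h ▸ Set.inter_subset_inter_left _ (hker _ _ hLL))
      · right
        exact fun L'' h1 h2 => h L'' h1 (htr _ _ _ h2 hLL)) (by
      intro j L hL
      by_cases h : ∀ L', L'.Infinite → (L' \ L).Finite → (ker L' ∩ e j).Nonempty
      · exact ⟨L, subset_rfl, hL, Or.inr h⟩
      · push Not at h
        obtain ⟨L', h1, h2, h3⟩ := h
        refine ⟨L' ∩ L, Set.inter_subset_right, ?_, Or.inl ?_⟩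
        · have := h1.sdiff h2
          rwa [Set.sdiff_sdiff_right_self] at this
        · have hs : ker (L' ∩ L) ⊆ ker L' := hker _ _ (by
            rw [Set.sdiff_eq_empty.2 Set.inter_subset_left]; exact Set.finite_empty)
          exact Set.subset_empty_iff.1 (h3 ▸ Set.inter_subset_inter_left _ hs)) L hL
  have hAne : (ker M).Nonempty := by
    obtain ⟨A, ⟨x, hx⟩, hA⟩ := hcon M hML hM
    exact ⟨x, A, hA, hx⟩
  have hfin : ∀ O : Set X, IsOpen O → (O ∩ ker M).Nonempty →
      {n | n ∈ M ∧ ¬ ((∃ x ∈ O ∩ ker M, f n x < a) ∧ ∃ y ∈ O ∩ ker M, b < f n y)}.Finite := by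
    rintro O hO ⟨x, hxO, hxM⟩
    by_contra hinf
    set L' := {n | n ∈ M ∧ ¬ ((∃ x ∈ O ∩ ker M, f n x < a) ∧ ∃ y ∈ O ∩ ker M, b < f n y)} with hL'
    obtain ⟨V, hV, hxV, hVO⟩ := hB.exists_subset_of_mem_open hxO hO
    have : V ∈ Set.range e := by rw [← he]; exact Set.mem_insert_of_mem _ hV
    obtain ⟨j, rfl⟩ := this
    have hsub : (L' \ M).Finite := by
      rw [Set.sdiff_eq_empty.2 (fun n hn => hn.1)]; exact Set.finite_empty
    rcases hMQ j with h | h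
    · exact (Set.eq_empty_iff_forall_notMem.1 h) x ⟨hxM, hxV⟩
    · have hne := h L' hinf hsub
      rw [Set.inter_comm] at hne
      obtain ⟨n, hn, ⟨y, hy, hy'⟩, ⟨z, hz, hz'⟩⟩ :=
        (badSet_sUnion f a b L' (e j) (hB.isOpen hV) hne).nonempty
      exact hn.2 ⟨⟨y, ⟨hVO hy.1, hker _ _ hsub hy.2⟩, hy'⟩,
        ⟨z, ⟨hVO hz.1, hker _ _ hsub hz.2⟩, hz'⟩⟩
  apply h2
  refine tree_independent (Set.range f) (by rintro _ ⟨n, rfl⟩; exact hf n) (ker M) hAne a b hab ?_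
  intro S hS hSO
  have hfin2 : (⋃ O ∈ S, {n | n ∈ M ∧ ¬ ((∃ x ∈ O ∩ ker M, f n x < a) ∧
      ∃ y ∈ O ∩ ker M, b < f n y)}).Finite :=
    hS.biUnion fun O hO => hfin O (hSO O hO).1 (hSO O hO).2
  obtain ⟨n, hnM, hn⟩ := (hM.sdiff hfin2).nonempty
  refine ⟨f n, ⟨n, rfl⟩, fun O hO => ?_⟩
  by_contra hno
  exact hn (Set.mem_biUnion hO ⟨hnM, hno⟩)

/-- (2) → (5) for second countable spaces. -/
lemma tame_fragmented_subseq {X : Type*} [TopologicalSpace X] [SecondCountableTopology X]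
    (f : ℕ → X → ℝ) (hf : ∀ n, Continuous (f n)) (C : ℝ) (hC : ∀ n x, |f n x| ≤ C)
    (h2 : ¬ ∃ g : ℕ → X → ℝ, (∀ n, g n ∈ Set.range f) ∧ IsIndependentSeq g) :
    ∃ φ : ℕ → ℕ, StrictMono φ ∧ IsFragmentedFamilyR (Set.range fun m => f (φ m)) := by
  classical
  obtain ⟨e, he⟩ := exists_surjective_nat (ℚ × ℚ)
  let Q : ℕ → Set ℕ → Prop := fun j L => (e j).1 < (e j).2 →
    ∀ A : Set X, A.Nonempty → ¬ BadSet f (e j).1 (e j).2 L A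
  obtain ⟨L, -, hL, hLQ⟩ := diag_lemma Q (by
      intro j L L' _ hLL h hj A hA hbad
      exact h hj A hA (hbad.mono hLL)) (by
      intro j L hL
      by_cases hj : (e j).1 < (e j).2
      · obtain ⟨L', h1, h3, h4⟩ := tame_pair f hf h2 (e j).1 (e j).2 (by exact_mod_cast hj) L hL
        exact ⟨L', h1, h3, fun _ => h4⟩
      · exact ⟨L, subset_rfl, hL, fun h => absurd h hj⟩) Set.univ Set.infinite_univ
  refine ⟨Nat.nth (· ∈ L), Nat.nth_strictMono hL, ?_⟩
  intro A hA ε hε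
  obtain ⟨T, hT1, hT⟩ := grid_exists C ε hε
  let R : ℚ × ℚ → Set X → Prop := fun q O =>
    {n | n ∈ L ∧ (∃ x ∈ O ∩ A, f n x < q.1) ∧ ∃ y ∈ O ∩ A, (q.2 : ℝ) < f n y}.Finite
  obtain ⟨O, hO, ⟨x, hxO, hxA⟩, hOR⟩ := shrink_finset A R (by
      intro q O O' hOO h
      refine h.subset ?_
      rintro n ⟨h1, ⟨y, hy, hy'⟩, ⟨z, hz, hz'⟩⟩
      exact ⟨h1, ⟨y, ⟨hOO hy.1, hy.2⟩, hy'⟩, ⟨z, ⟨hOO hz.1, hz.2⟩, hz'⟩⟩) T (by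
      intro q hq O hO hOA
      obtain ⟨j, rfl⟩ := he q
      have := hLQ j (hT1 _ hq) (O ∩ A) hOA
      unfold BadSet at this
      push Not at this
      obtain ⟨V, hV, hVne, hVfin⟩ := this
      refine ⟨V ∩ O, Set.inter_subset_right, hV.inter hO, ?_, ?_⟩
      · rwa [Set.inter_assoc]
      · change Set.Finite _
        rw [Set.inter_assoc]
        exact hVfin) hA
  let E : Set ℕ := ⋃ q ∈ T,
    {n | n ∈ L ∧ (∃ x ∈ O ∩ A, f n x < q.1) ∧ ∃ y ∈ O ∩ A, (q.2 : ℝ) < f n y}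
  have hE : E.Finite := T.finite_toSet.biUnion fun q hq => hOR q hq
  refine ⟨O ∩ ⋂ n ∈ E, {y | |f n y - f n x| < ε / 2}, ?_, ⟨x, ⟨hxO, ?_⟩, hxA⟩, ?_⟩
  · exact hO.inter (hE.isOpen_biInter fun n _ =>
      isOpen_lt (((hf n).sub continuous_const).abs) continuous_const)
  · simp only [Set.mem_iInter]
    intro n _
    simpa using hε
  · rintro _ ⟨m, rfl⟩ y ⟨⟨hyO, hyE⟩, hyA⟩ z ⟨⟨hzO, hzE⟩, hzA⟩
    have hmL : Nat.nth (· ∈ L) m ∈ L := Nat.nth_mem_of_infinite hL m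
    dsimp only
    generalize Nat.nth (· ∈ L) m = n at hmL
    simp only [Set.mem_iInter, Set.mem_ofPred_eq] at hyE hzE
    by_cases hn : n ∈ E
    · have h1 := abs_lt.1 (hyE n hn)
      have h2 := abs_lt.1 (hzE n hn)
      exact abs_le.2 ⟨by linarith, by linarith⟩
    · by_contra hcon
      apply hn
      rcases lt_abs.1 (not_le.1 hcon) with h | h
      · obtain ⟨q, hq, h1, h2⟩ := hT (f n z) (f n y) (hC _ _) (hC _ _) (by linarith)
        exact Set.mem_biUnion hq ⟨hmL, ⟨z, ⟨hzO, hzA⟩, h1⟩, ⟨y, ⟨hyO, hyA⟩, h2⟩⟩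
      · obtain ⟨q, hq, h1, h2⟩ := hT (f n y) (f n z) (hC _ _) (hC _ _) (by linarith)
        exact Set.mem_biUnion hq ⟨hmL, ⟨y, ⟨hyO, hyA⟩, h1⟩, ⟨z, ⟨hzO, hzA⟩, h2⟩⟩

/-- A fragmented sequence on a second countable space is separable for the sup pseudometric. -/
lemma fragmented_separable {X : Type*} [TopologicalSpace X] [SecondCountableTopology X]
    (f : ℕ → X → ℝ) (hfr : IsFragmentedFamilyR (Set.range f)) (ε : ℝ) (hε : 0 < ε) :
    ∃ D : Set X, D.Countable ∧ ∀ x, ∃ d ∈ D, ∀ n, |f n x - f n d| ≤ ε := by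
  classical
  obtain ⟨B, hBc, _, hB⟩ := TopologicalSpace.exists_countable_basis X
  let G : Set (Set X) := {V | V ∈ B ∧ ∃ D : Set X, D.Countable ∧
    ∀ x ∈ V, ∃ d ∈ D, ∀ n, |f n x - f n d| ≤ ε}
  have hGc : G.Countable := hBc.mono fun V hV => hV.1
  have hex : ∀ V ∈ G, ∃ D : Set X, D.Countable ∧ ∀ x ∈ V, ∃ d ∈ D, ∀ n, |f n x - f n d| ≤ ε :=
    fun V hV => hV.2
  choose! D hDc hD using hex
  have hcov : ∀ x ∈ ⋃₀ G, ∃ d ∈ ⋃ V ∈ G, D V, ∀ n, |f n x - f n d| ≤ ε := by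
    rintro x ⟨V, hV, hx⟩
    obtain ⟨d, hd, h⟩ := hD V hV x hx
    exact ⟨d, Set.mem_biUnion hV hd, h⟩
  have hDD : (⋃ V ∈ G, D V).Countable := hGc.biUnion hDc
  refine ⟨⋃ V ∈ G, D V, hDD, fun x => hcov x ?_⟩
  by_contra hx
  obtain ⟨O, hO, ⟨y, hyO, hyA⟩, hsm⟩ := hfr (⋃₀ G)ᶜ ⟨x, hx⟩ ε hε
  obtain ⟨V, hV, hyV, hVO⟩ := hB.exists_subset_of_mem_open hyO hO
  apply hyA
  refine ⟨V, ⟨hV, insert y (⋃ V ∈ G, D V), hDD.insert _, ?_⟩, hyV⟩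
  intro z hz
  by_cases hzG : z ∈ ⋃₀ G
  · obtain ⟨d, hd, h⟩ := hcov z hzG
    exact ⟨d, Set.mem_insert_of_mem _ hd, h⟩
  · exact ⟨y, Set.mem_insert _ _, fun n => hsm (f n) ⟨n, rfl⟩ z ⟨hVO hz, hzG⟩ y ⟨hyO, hyA⟩⟩

lemma fragmented_convergent {X : Type*} [TopologicalSpace X] [SecondCountableTopology X]
    (f : ℕ → X → ℝ) (C : ℝ) (hC : ∀ n x, |f n x| ≤ C)
    (hfr : IsFragmentedFamilyR (Set.range f)) :
    ∃ (φ : ℕ → ℕ) (g : X → ℝ), StrictMono φ ∧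
        ∀ x : X, Tendsto (fun m => f (φ m) x) atTop (nhds (g x)) := by
  classical
  have h := fun k : ℕ => fragmented_separable f hfr (1 / ((k : ℝ) + 1)) (by positivity)
  choose D hDc hD using h
  let E : Set X := ⋃ k, D k
  have hEc : E.Countable := Set.countable_iUnion hDc
  have : Countable E := hEc.to_subtype
  have hK : IsCompact (Set.pi Set.univ fun _ : E => Set.Icc (-C) C) :=
    isCompact_univ_pi fun _ => isCompact_Icc
  obtain ⟨l, _, φ, hφ, hl⟩ := hK.tendsto_subseq (x := fun n (d : E) => f n d)
    (fun n d _ => abs_le.1 (hC n d))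
  rw [tendsto_pi_nhds] at hl
  have hcau : ∀ x, CauchySeq (fun m => f (φ m) x) := by
    intro x
    rw [Metric.cauchySeq_iff]
    intro ε hε
    obtain ⟨k, hk⟩ := exists_nat_one_div_lt (show 0 < ε / 3 by positivity)
    obtain ⟨d, hd, hdx⟩ := hD k x
    have hc : CauchySeq (fun m => f (φ m) d) :=
      (hl ⟨d, Set.mem_iUnion.2 ⟨k, hd⟩⟩).cauchySeq
    obtain ⟨N, hN⟩ := Metric.cauchySeq_iff.1 hc (ε / 3) (by positivity)
    refine ⟨N, fun m hm n hn => ?_⟩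
    have h1 := hN m hm n hn
    rw [Real.dist_eq] at h1 ⊢
    have h2 := abs_le.1 ((hdx (φ m)).trans hk.le)
    have h3 := abs_le.1 ((hdx (φ n)).trans hk.le)
    have h1' := abs_lt.1 h1
    exact abs_lt.2 ⟨by linarith, by linarith⟩
  choose g hg using fun x => cauchySeq_tendsto_of_complete (hcau x)
  exact ⟨φ, g, hφ, hg⟩

/-- Independent sequences are `l₁`-sequences. -/
lemma indep_l1 {X : Type*} (f : ℕ → X → ℝ) (C : ℝ) (hC : ∀ n x, |f n x| ≤ C)
    (h : IsIndependentSeq f) : IsL1Seq f := by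
  classical
  obtain ⟨a, b, hab, h⟩ := h
  refine ⟨(b - a) / 2, by linarith, fun n c => ?_⟩
  let P := (Finset.range n).filter fun i => 0 ≤ c i
  let M := (Finset.range n).filter fun i => ¬ 0 ≤ c i
  have hPM : Disjoint P M := Finset.disjoint_filter_filter_not _ _ _
  obtain ⟨z, hz1, hz2⟩ := h M P hPM.symm
  obtain ⟨w, hw1, hw2⟩ := h P M hPM
  simp only [Set.mem_iInter, Set.mem_ofPred_eq] at hz1 hz2 hw1 hw2
  have hbdd : BddAbove (Set.range fun z => |∑ i ∈ Finset.range n, c i * f i z|) := by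
    refine ⟨∑ i ∈ Finset.range n, |c i| * C, ?_⟩
    rintro _ ⟨x, rfl⟩
    refine (Finset.abs_sum_le_sum_abs _ _).trans (Finset.sum_le_sum fun i _ => ?_)
    rw [abs_mul]
    exact mul_le_mul_of_nonneg_left (hC i x) (abs_nonneg _)
  have h1 := le_ciSup hbdd z
  have h2 := le_ciSup hbdd w
  have h3 : (b - a) * ∑ i ∈ Finset.range n, |c i| ≤
      ∑ i ∈ Finset.range n, c i * f i z - ∑ i ∈ Finset.range n, c i * f i w := by
    rw [← Finset.sum_sub_distrib, Finset.mul_sum]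
    refine Finset.sum_le_sum fun i hi => ?_
    by_cases hc : 0 ≤ c i
    · have hP : i ∈ P := Finset.mem_filter.2 ⟨hi, hc⟩
      have := hz2 i hP
      have := hw1 i hP
      rw [abs_of_nonneg hc]
      nlinarith
    · have hM : i ∈ M := Finset.mem_filter.2 ⟨hi, hc⟩
      have := hz1 i hM
      have := hw2 i hM
      push Not at hc
      rw [abs_of_neg hc]
      nlinarith
  have h4 := le_abs_self (∑ i ∈ Finset.range n, c i * f i z)
  have h5 := neg_abs_le (∑ i ∈ Finset.range n, c i * f i w)
  linarith

/-- An independent sequence of continuous functions on a compact space realizes all patterns. -/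
lemma indep_full {X : Type*} [TopologicalSpace X] [CompactSpace X] (f : ℕ → X → ℝ)
    (hf : ∀ n, Continuous (f n)) (a b : ℝ)
    (h : ∀ P M : Finset ℕ, Disjoint P M →
      ((⋂ n ∈ P, {z | f n z < a}) ∩ ⋂ n ∈ M, {z | b < f n z}).Nonempty) (σ : ℕ → Prop) :
    ∃ x, ∀ n, (σ n → b ≤ f n x) ∧ (¬ σ n → f n x ≤ a) := by
  classical
  let K : ℕ → Set X := fun n => {x | (σ n → b ≤ f n x) ∧ (¬ σ n → f n x ≤ a)}
  have hK : ∀ n, IsClosed (K n) := by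
    intro n
    by_cases hσ : σ n
    · simpa [K, hσ] using isClosed_le continuous_const (hf n)
    · simpa [K, hσ] using isClosed_le (hf n) continuous_const
  have := isCompact_univ.inter_iInter_nonempty K hK (by
    intro u
    obtain ⟨x, hx1, hx2⟩ := h (u.filter fun n => ¬ σ n) (u.filter fun n => σ n)
      (Finset.disjoint_filter_filter_not _ _ _).symm
    simp only [Set.mem_iInter, Set.mem_ofPred_eq, Finset.mem_filter] at hx1 hx2
    refine ⟨x, trivial, ?_⟩
    simp only [Set.mem_iInter]
    exact fun n hn => ⟨fun hσ => (hx2 n ⟨hn, hσ⟩).le, fun hσ => (hx1 n ⟨hn, hσ⟩).le⟩)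
  obtain ⟨x, -, hx⟩ := this
  exact ⟨x, fun n => Set.mem_iInter.1 hx n⟩

/-- Irreducible set on which an independent sequence oscillates everywhere. -/
lemma indep_irreducible {X : Type*} [TopologicalSpace X] [CompactSpace X] (f : ℕ → X → ℝ)
    (hf : ∀ n, Continuous (f n)) (a b : ℝ)
    (h : ∀ P M : Finset ℕ, Disjoint P M →
      ((⋂ n ∈ P, {z | f n z < a}) ∩ ⋂ n ∈ M, {z | b < f n z}).Nonempty) :
    ∃ A : Set X, A.Nonempty ∧ ∀ O : Set X, IsOpen O → (O ∩ A).Nonempty →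
      ∃ (N : ℕ) (σ : ℕ → Prop), ∀ τ : ℕ → Prop, (∀ n < N, τ n ↔ σ n) →
        ∃ x ∈ O ∩ A, ∀ n, (τ n → b ≤ f n x) ∧ (¬ τ n → f n x ≤ a) := by
  classical
  let K : (ℕ → Prop) → ℕ → Set X := fun σ n => {x | (σ n → b ≤ f n x) ∧ (¬ σ n → f n x ≤ a)}
  have hK : ∀ σ n, IsClosed (K σ n) := by
    intro σ n
    by_cases hσ : σ n
    · simpa [K, hσ] using isClosed_le continuous_const (hf n)
    · simpa [K, hσ] using isClosed_le (hf n) continuous_const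
  let Full : Set (Set X) := {S | IsClosed S ∧ ∀ σ, (S ∩ ⋂ n, K σ n).Nonempty}
  have huniv : Set.univ ∈ Full := by
    refine ⟨isClosed_univ, fun σ => ?_⟩
    obtain ⟨x, hx⟩ := indep_full f hf a b h σ
    exact ⟨x, trivial, Set.mem_iInter.2 hx⟩
  obtain ⟨A, -, hAmin⟩ := zorn_superset_nonempty Full (by
    intro c hc hchain hne
    refine ⟨⋂₀ c, ⟨isClosed_sInter fun S hS => (hc hS).1, fun σ => ?_⟩,
      fun S hS => Set.sInter_subset_of_mem hS⟩
    have : Nonempty c := hne.to_subtype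
    have hcl : IsClosed (⋂ n, K σ n) := isClosed_iInter (hK σ)
    have := IsCompact.nonempty_iInter_of_directed_nonempty_isCompact_isClosed
      (fun S : c => S.1 ∩ ⋂ n, K σ n) (by
        intro S T
        rcases hchain.total S.2 T.2 with hST | hST
        · exact ⟨S, subset_rfl, Set.inter_subset_inter_left _ hST⟩
        · exact ⟨T, Set.inter_subset_inter_left _ hST, subset_rfl⟩)
      (fun S => (hc S.2).2 σ) (fun S => ((hc S.2).1.inter hcl).isCompact)
      (fun S => (hc S.2).1.inter hcl)
    obtain ⟨x, hx⟩ := this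
    rw [Set.mem_iInter] at hx
    refine ⟨x, fun S hS => (hx ⟨S, hS⟩).1, (hx (Classical.arbitrary c)).2⟩) Set.univ huniv
  have hA : A ∈ Full := hAmin.prop
  refine ⟨A, ?_, ?_⟩
  · obtain ⟨x, hx⟩ := hA.2 (fun _ => True)
    exact ⟨x, hx.1⟩
  · intro O hO hOA
    have hcl : IsClosed (A \ O) := hA.1.sdiff hO
    have hnot : A \ O ∉ Full := by
      intro hF
      have := hAmin.le_of_le hF Set.sdiff_subset
      obtain ⟨x, hxO, hxA⟩ := hOA
      exact (this hxA).2 hxO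
    have : ∃ σ, (A \ O) ∩ ⋂ n, K σ n = ∅ := by
      by_contra hcon
      push Not at hcon
      exact hnot ⟨hcl, hcon⟩
    obtain ⟨σ, hσ⟩ := this
    obtain ⟨u, hu⟩ := hcl.isCompact.elim_finite_subfamily_closed (K σ) (hK σ) hσ
    refine ⟨u.sup id + 1, σ, fun τ hτ => ?_⟩
    obtain ⟨x, hxA, hx⟩ := hA.2 τ
    rw [Set.mem_iInter] at hx
    refine ⟨x, ⟨?_, hxA⟩, hx⟩
    by_contra hxO
    refine Set.eq_empty_iff_forall_notMem.1 hu x ⟨⟨hxA, hxO⟩, ?_⟩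
    simp only [Set.mem_iInter]
    intro n hn
    have hle : n ≤ u.sup id := Finset.le_sup (f := id) hn
    have := hx n
    have h' := hτ n (by omega)
    exact ⟨fun hs => this.1 (h'.2 hs), fun hs => this.2 (fun ht => hs (h'.1 ht))⟩

/-- (5) fails for independent sequences. -/
lemma indep_not_fragmented {X : Type*} [TopologicalSpace X] [CompactSpace X] (f : ℕ → X → ℝ)
    (hf : ∀ n, Continuous (f n)) (h : IsIndependentSeq f) (φ : ℕ → ℕ) (hφ : StrictMono φ) :
    ¬ IsFragmentedFamilyR (Set.range fun m => f (φ m)) := by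
  intro hfr
  obtain ⟨a, b, hab, h⟩ := h
  obtain ⟨A, hA, hAO⟩ := indep_irreducible f hf a b h
  obtain ⟨O, hO, hOA, hsm⟩ := hfr A hA ((b - a) / 2) (by linarith)
  obtain ⟨N, σ, hσ⟩ := hAO O hO hOA
  have hN : N ≤ φ N := hφ.id_le N
  obtain ⟨x, hx, hx'⟩ := hσ (fun n => if n < N then σ n else True)
    (fun n hn => by simp [hn])
  obtain ⟨y, hy, hy'⟩ := hσ (fun n => if n < N then σ n else False)
    (fun n hn => by simp [hn])
  have h1 := (hx' (φ N)).1 (by simp [not_lt.2 hN])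
  have h2 := (hy' (φ N)).2 (by simp [not_lt.2 hN])
  have h3 := abs_le.1 (hsm _ ⟨N, rfl⟩ x hx y hy)
  dsimp only at h3
  linarith [h3.2]

/-- (4) fails for independent sequences. -/
lemma indep_not_closure {X : Type*} [TopologicalSpace X] [CompactSpace X] (f : ℕ → X → ℝ)
    (hf : ∀ n, Continuous (f n)) (h : IsIndependentSeq f) (C : ℝ) (hC : ∀ n x, |f n x| ≤ C)
    (F : Set (X → ℝ)) (hF : ∀ n, f n ∈ F) :
    ∃ g ∈ closure F, ¬ IsFragmentedFn g := by
  obtain ⟨a, b, hab, h⟩ := h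
  obtain ⟨A, hA, hAO⟩ := indep_irreducible f hf a b h
  have hlim : ∀ x, ∃ l, Tendsto (fun n => f n x) (hyperfilter ℕ : Filter ℕ) (nhds l) := by
    intro x
    obtain ⟨l, -, hl⟩ := isCompact_Icc.ultrafilter_le_nhds ((hyperfilter ℕ).map fun n => f n x)
      (s := Set.Icc (-C) C) (by
        rw [le_principal_iff]
        exact Filter.Eventually.of_forall (f := (hyperfilter ℕ : Filter ℕ))
          (fun n => abs_le.1 (hC n x)))
    exact ⟨l, hl⟩
  choose g hg using hlim
  refine ⟨g, ?_, ?_⟩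
  · exact mem_closure_of_tendsto (tendsto_pi_nhds.2 hg) (Filter.Eventually.of_forall hF)
  · intro hfr
    obtain ⟨O, hO, hOA, hsm⟩ := hfr A hA ((b - a) / 2) (by linarith)
    obtain ⟨N, σ, hσ⟩ := hAO O hO hOA
    obtain ⟨x, hx, hx'⟩ := hσ (fun n => if n < N then σ n else True)
      (fun n hn => by simp [hn])
    obtain ⟨y, hy, hy'⟩ := hσ (fun n => if n < N then σ n else False)
      (fun n hn => by simp [hn])
    have hev : ∀ᶠ n in (hyperfilter ℕ : Filter ℕ), N ≤ n :=
      Nat.hyperfilter_le_atTop (eventually_ge_atTop N)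
    have h1 : b ≤ g x := ge_of_tendsto (hg x) (hev.mono fun n hn =>
      (hx' n).1 (by simp [not_lt.2 hn]))
    have h2 : g y ≤ a := le_of_tendsto (hg y) (hev.mono fun n hn =>
      (hy' n).2 (by simp [not_lt.2 hn]))
    have h3 := abs_le.1 (hsm x hx y hy)
    linarith [h3.2]

/-- Simons' inequality type argument: a bounded pointwise null sequence of continuous functions
on a compact space has convex combinations of small norm. -/
lemma simons_null {X : Type*} [TopologicalSpace X] [CompactSpace X] (h : ℕ → C(X, ℝ))
    (a C : ℝ) (ha : 0 < a) (hC : ∀ n, ‖h n‖ ≤ C)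
    (hconv : ∀ y ∈ convexHull ℝ (Set.range h), a ≤ ‖y‖)
    (h0 : ∀ x, Tendsto (fun n => h n x) atTop (nhds 0)) : False := by
  classical
  let D : ℕ → Set C(X, ℝ) := fun n => closure (convexHull ℝ (h '' Set.Ici n))
  have hDcl : ∀ n, IsClosed (D n) := fun n => isClosed_closure
  have hDcv : ∀ n, Convex ℝ (D n) := fun n => (convex_convexHull ℝ _).closure
  have hDanti : ∀ m n, m ≤ n → D n ⊆ D m := fun m n hmn =>
    closure_mono (convexHull_mono (Set.image_mono (Set.Ici_subset_Ici.2 hmn)))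
  have hDmin : ∀ (n : ℕ) (S : Set C(X, ℝ)), IsClosed S → Convex ℝ S → (∀ k, n ≤ k → h k ∈ S) →
      D n ⊆ S := by
    intro n S hS1 hS2 hS3
    refine closure_minimal (convexHull_min ?_ hS2) hS1
    rintro _ ⟨k, hk, rfl⟩
    exact hS3 k hk
  have hDne : ∀ n, (D n).Nonempty := fun n =>
    ⟨h n, subset_closure (subset_convexHull ℝ _ ⟨n, Set.mem_Ici.2 le_rfl, rfl⟩)⟩
  have hDC : ∀ n, ∀ y ∈ D n, ‖y‖ ≤ C := by
    intro n y hy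
    have := hDmin n (Metric.closedBall 0 C) Metric.isClosed_closedBall (convex_closedBall 0 C)
      (fun k _ => by simpa using hC k) hy
    simpa using this
  have hDa : ∀ y ∈ D 0, a ≤ ‖y‖ := by
    intro y hy
    have hcl : IsClosed {y : C(X, ℝ) | a ≤ ‖y‖} := isClosed_le continuous_const continuous_norm
    refine closure_minimal ?_ hcl hy
    intro z hz
    exact hconv z (convexHull_mono (Set.image_subset_range _ _) hz)
  have hnear : ∀ (n : ℕ) (u : C(X, ℝ)), ∃ y ∈ D n, ∀ z ∈ D n,
      ‖u + (1 / 2 : ℝ) ^ n • y‖ ≤ ‖u + (1 / 2 : ℝ) ^ n • z‖ + a / 4 * (1 / 4) ^ n := by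
    intro n u
    let S : Set ℝ := (fun y => ‖u + (1 / 2 : ℝ) ^ n • y‖) '' D n
    have hSne : S.Nonempty := (hDne n).image _
    have hSb : BddBelow S := ⟨0, by rintro _ ⟨y, _, rfl⟩; exact norm_nonneg _⟩
    obtain ⟨_, ⟨y, hy, rfl⟩, hlt⟩ := exists_lt_of_csInf_lt hSne
      (show sInf S < sInf S + a / 4 * (1 / 4) ^ n by
        have : 0 < a / 4 * (1 / 4) ^ n := by positivity
        linarith)
    refine ⟨y, hy, fun z hz => ?_⟩
    have := csInf_le hSb ⟨z, hz, rfl⟩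
    dsimp only at hlt this
    linarith
  choose Y hYD hY using hnear
  let v : ℕ → C(X, ℝ) := fun n => Nat.rec 0 (fun n u => u + (1 / 2 : ℝ) ^ (n + 1) • Y n u) n
  let y : ℕ → C(X, ℝ) := fun n => Y n (v n)
  have hv0 : v 0 = 0 := rfl
  have hv : ∀ n, v (n + 1) = v n + (1 / 2 : ℝ) ^ (n + 1) • y n := fun n => rfl
  have hyD : ∀ n, y n ∈ D n := fun n => hYD _ _
  have hymin : ∀ n, ∀ z ∈ D n, ‖v n + (1 / 2 : ℝ) ^ n • y n‖ ≤
      ‖v n + (1 / 2 : ℝ) ^ n • z‖ + a / 4 * (1 / 4) ^ n := fun n => hY n (v n)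
  have hcau : CauchySeq v := by
    refine cauchySeq_of_le_geometric (1 / 2) C (by norm_num) fun n => ?_
    rw [hv, dist_self_add_right, norm_smul, Real.norm_of_nonneg (by positivity), pow_succ]
    have h1 := hDC n _ (hyD n)
    have h2 : (0 : ℝ) < (1 / 2) ^ n := by positivity
    have h3 := norm_nonneg (y n)
    nlinarith
  obtain ⟨V, hV⟩ := cauchySeq_tendsto_of_complete hcau
  have hw1 : ∀ j n, ∀ z ∈ D (n + j),
      (2 : ℝ) ^ n • (v (n + j) - v n) + (1 / 2 : ℝ) ^ j • z ∈ D n := by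
    intro j
    induction j with
    | zero => intro n z hz; simpa using hz
    | succ j ih =>
      intro n z hz
      have hz' : (1 / 2 : ℝ) • y (n + j) + (1 / 2 : ℝ) • z ∈ D (n + j) :=
        hDcv (n + j) (hyD _) (hDanti _ _ (by omega) hz) (by norm_num) (by norm_num) (by norm_num)
      have := ih n _ hz'
      convert this using 1
      have e : v (n + (j + 1)) = v (n + j) + (1 / 2 : ℝ) ^ (n + j + 1) • y (n + j) := hv (n + j)
      have e2 : (2 : ℝ) ^ n * (1 / 2) ^ (n + j + 1) = (1 / 2) ^ j * (1 / 2) := by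
        rw [pow_succ, pow_add, ← mul_assoc, ← mul_assoc, ← mul_pow]
        norm_num
      rw [e, add_sub_right_comm, smul_add, smul_smul, e2, smul_add, smul_smul, smul_smul, pow_succ,
        add_assoc]
  have hw : ∀ n, (2 : ℝ) ^ n • (V - v n) ∈ D n := by
    intro n
    have ht1 : Tendsto (fun j => v (n + j)) atTop (nhds V) := by
      have := (tendsto_add_atTop_iff_nat (f := v) n).2 hV
      simpa [add_comm] using this
    have ht2 : Tendsto (fun j => (1 / 2 : ℝ) ^ j • y (n + j)) atTop (nhds 0) := by
      have hz : Tendsto (fun j : ℕ => (1 / 2 : ℝ) ^ j * C) atTop (nhds 0) := by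
        simpa using (tendsto_pow_atTop_nhds_zero_of_lt_one (r := (1 / 2 : ℝ))
          (by norm_num) (by norm_num)).mul_const C
      refine squeeze_zero_norm (fun j => ?_) hz
      rw [norm_smul, Real.norm_of_nonneg (by positivity)]
      exact mul_le_mul_of_nonneg_left (hDC _ _ (hyD _)) (by positivity)
    have ht : Tendsto (fun j => (2 : ℝ) ^ n • (v (n + j) - v n) + (1 / 2 : ℝ) ^ j • y (n + j))
        atTop (nhds ((2 : ℝ) ^ n • (V - v n) + 0)) :=
      ((ht1.sub_const _).const_smul _).add ht2
    rw [add_zero] at ht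
    exact (hDcl n).mem_of_tendsto ht (Eventually.of_forall fun j => hw1 j n _ (hyD _))
  have hVa : a ≤ ‖V‖ := by
    have := hDa _ (hw 0)
    simpa [hv0] using this
  have hrec : ∀ n, 2 * ‖v (n + 1)‖ ≤ ‖V‖ + a / 4 * (1 / 4) ^ n + ‖v n‖ := by
    intro n
    have h1 := hymin n _ (hw n)
    rw [smul_smul, ← mul_pow] at h1
    have h2 : v n + ((1 / 2 * 2 : ℝ) ^ n) • (V - v n) = V := by
      norm_num
    rw [h2] at h1
    have h3 : (2 : ℝ) • v (n + 1) = (v n + (1 / 2 : ℝ) ^ n • y n) + v n := by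
      rw [hv, smul_add, smul_smul, pow_succ, two_smul]
      have : (2 : ℝ) * ((1 / 2) ^ n * (1 / 2)) = (1 / 2) ^ n := by ring
      rw [this]
      abel
    have h4 : 2 * ‖v (n + 1)‖ = ‖(2 : ℝ) • v (n + 1)‖ := by
      rw [norm_smul]; norm_num
    rw [h4, h3]
    exact (norm_add_le _ _).trans (by linarith)
  have hd : ∀ n, ‖V‖ - a / 2 * (1 - (1 / 2) ^ n) ≤ 2 ^ n * (‖V‖ - ‖v n‖) := by
    intro n
    induction n with
    | zero => simp [hv0]
    | succ n ih =>
      have h1 := hrec n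
      have h2 : (2 : ℝ) ^ n * (a / 4 * (1 / 4) ^ n) = a / 4 * (1 / 2) ^ n := by
        rw [mul_left_comm, ← mul_pow]; norm_num
      have h3 : (0 : ℝ) < 2 ^ n := by positivity
      have h4 := mul_le_mul_of_nonneg_left h1 h3.le
      rw [pow_succ, pow_succ]
      nlinarith
  have hd2 : ∀ n, a / 2 ≤ 2 ^ n * (‖V‖ - ‖v n‖) := by
    intro n
    have h1 := hd n
    have h2 : (0 : ℝ) < (1 / 2) ^ n := by positivity
    nlinarith
  have hXne : Nonempty X := by
    by_contra hX
    rw [not_nonempty_iff] at hX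
    have : ‖V‖ ≤ 0 := (ContinuousMap.norm_le V le_rfl).2 fun x => (hX.false x).elim
    linarith
  obtain ⟨x, hx⟩ : ∃ x, ‖V‖ ≤ ‖V x‖ := by
    obtain ⟨x, -, hx⟩ := isCompact_univ.exists_isMaxOn Set.univ_nonempty
      (f := fun x => ‖V x‖) (by fun_prop)
    refine ⟨x, (ContinuousMap.norm_le V (norm_nonneg _)).2 fun y => hx (Set.mem_univ y)⟩
  have hev := (h0 x).eventually (Metric.ball_mem_nhds (0 : ℝ) (show 0 < a / 4 by linarith))
  obtain ⟨N, hN⟩ := eventually_atTop.1 hev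
  have hsmall : ∀ w ∈ D N, |w x| ≤ a / 4 := by
    have hcl : IsClosed {w : C(X, ℝ) | w x ∈ Set.Icc (-(a / 4)) (a / 4)} :=
      isClosed_Icc.preimage (continuous_eval_const x)
    have hcv : Convex ℝ {w : C(X, ℝ) | w x ∈ Set.Icc (-(a / 4)) (a / 4)} := by
      intro w hw z hz s t hs ht hst
      exact convex_Icc _ _ hw hz hs ht hst
    intro w hw
    refine abs_le.2 (hDmin N _ hcl hcv (fun k hk => ?_) hw)
    have := hN k hk
    rw [dist_zero_right, Real.norm_eq_abs] at this
    exact abs_le.1 this.le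
  have h1 := hsmall _ (hw N)
  have h2 : ((2 : ℝ) ^ N • (V - v N)) x = 2 ^ N * (V x - v N x) := rfl
  rw [h2, abs_mul, abs_of_pos (by positivity)] at h1
  have h3 : ‖V‖ - ‖v N‖ ≤ |V x - v N x| := by
    have := (v N).norm_coe_le_norm x
    have h4 := norm_sub_norm_le (V x) (v N x)
    rw [← Real.norm_eq_abs]
    linarith
  have h4 := mul_le_mul_of_nonneg_left h3 (show (0 : ℝ) ≤ 2 ^ N by positivity)
  linarith [hd2 N]

/-- (3) → (1). -/
lemma l1_not_convergent {X : Type*} [TopologicalSpace X] [CompactSpace X] (f : ℕ → X → ℝ)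
    (hf : ∀ n, Continuous (f n)) (C : ℝ) (hC : ∀ n x, |f n x| ≤ C) (hl : IsL1Seq f)
    (φ : ℕ → ℕ) (hφ : StrictMono φ) (g : X → ℝ)
    (hg : ∀ x : X, Tendsto (fun m => f (φ m) x) atTop (nhds (g x))) : False := by
  classical
  obtain ⟨a, ha, hl⟩ := hl
  let G : ℕ → C(X, ℝ) := fun n => ⟨f n, hf n⟩
  let C' := max C 0
  have hGC : ∀ n, ‖G n‖ ≤ C' := fun n => (ContinuousMap.norm_le _ (le_max_right _ _)).2
    fun x => (hC n x).trans (le_max_left _ _)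
  let T := Finsupp.linearCombination ℝ G
  have hT : ∀ c : ℕ →₀ ℝ, a * ∑ i ∈ c.support, |c i| ≤ ‖T c‖ := by
    intro c
    let n := c.support.sup id + 1
    have hsub : c.support ⊆ Finset.range n := by
      intro i hi
      have : i ≤ c.support.sup id := Finset.le_sup (f := id) hi
      exact Finset.mem_range.2 (by omega)
    have h1 : ∑ i ∈ c.support, |c i| = ∑ i ∈ Finset.range n, |c i| :=
      Finset.sum_subset hsub fun i _ hi => by simp [Finsupp.notMem_support_iff.1 hi]
    have h2 : T c = ∑ i ∈ Finset.range n, c i • G i := by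
      change (c.sum fun i r => r • G i) = _
      exact Finsupp.sum_of_support_subset c hsub _ (fun i _ => zero_smul _ _)
    rw [h1]
    refine (hl n c).trans ?_
    refine Real.iSup_le (fun z => ?_) (norm_nonneg _)
    have h3 : ∑ i ∈ Finset.range n, c i * f i z = (T c) z := by
      rw [h2, ContinuousMap.sum_apply]
      rfl
    rw [h3]
    exact (T c).norm_coe_le_norm z
  let s : ℕ → ℝ := fun i => if ∃ k, i = φ (2 * k + 1) then 1 else
    if ∃ k, i = φ (2 * k) then -1 else 0
  have hs : ∀ i, |s i| ≤ 1 := by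
    intro i
    simp only [s]
    split_ifs <;> norm_num
  have hs1 : ∀ k, s (φ (2 * k + 1)) = 1 := fun k => if_pos ⟨k, rfl⟩
  have hs2 : ∀ k, s (φ (2 * k)) = -1 := by
    intro k
    have h1 : ¬ ∃ j, φ (2 * k) = φ (2 * j + 1) := by
      rintro ⟨j, hj⟩
      have := hφ.injective hj
      omega
    have h2 : ∃ j, φ (2 * k) = φ (2 * j) := ⟨k, rfl⟩
    simp only [s, if_neg h1, if_pos h2]
  let Λ := Finsupp.linearCombination ℝ s
  let S : Set C(X, ℝ) := T '' {c | 2 ≤ Λ c}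
  have hScv : Convex ℝ S := (convex_halfSpace_ge Λ.isLinear 2).linear_image T
  have hSn : ∀ y ∈ S, 2 * a ≤ ‖y‖ := by
    rintro _ ⟨c, hc, rfl⟩
    have h1 : Λ c ≤ ∑ i ∈ c.support, |c i| := by
      change ∑ i ∈ c.support, c i • s i ≤ _
      refine Finset.sum_le_sum fun i _ => ?_
      rw [smul_eq_mul]
      refine (le_abs_self _).trans ?_
      rw [abs_mul]
      exact mul_le_of_le_one_right (abs_nonneg _) (hs i)
    have hc' : 2 ≤ Λ c := hc
    have := hT c
    nlinarith
  let h : ℕ → C(X, ℝ) := fun k => G (φ (2 * k + 1)) - G (φ (2 * k))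
  have hhS : ∀ k, h k ∈ S := by
    intro k
    refine ⟨Finsupp.single (φ (2 * k + 1)) 1 - Finsupp.single (φ (2 * k)) 1, ?_, ?_⟩
    · change (2 : ℝ) ≤ Λ _
      simp only [Λ, map_sub, Finsupp.linearCombination_single, hs1, hs2]
      norm_num
    · simp only [T, map_sub, Finsupp.linearCombination_single, one_smul, h]
  refine simons_null h (2 * a) (C' + C') (by linarith)
    (fun n => (norm_sub_le _ _).trans (add_le_add (hGC _) (hGC _))) ?_ ?_
  · intro y hy
    exact hSn y (convexHull_min (by rintro _ ⟨k, rfl⟩; exact hhS k) hScv hy)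
  · intro x
    have t1 : Tendsto (fun k : ℕ => 2 * k + 1) atTop atTop :=
      tendsto_atTop_mono (fun k => by simp only [id]; omega) tendsto_id
    have t2 : Tendsto (fun k : ℕ => 2 * k) atTop atTop :=
      tendsto_atTop_mono (fun k => by simp only [id]; omega) tendsto_id
    have := ((hg x).comp t1).sub ((hg x).comp t2)
    rw [sub_self] at this
    exact this

theorem stmt2 {X : Type*} [TopologicalSpace X] [CompactSpace X]
    (F : Set (X → ℝ)) (hFcont : ∀ f ∈ F, Continuous f)
    (hFbdd : ∃ C : ℝ, ∀ f ∈ F, ∀ x : X, |f x| ≤ C) :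
    List.TFAE [
      -- (1) no sequence of functions from `F` is an `l₁`-sequence
      ¬ ∃ f : ℕ → X → ℝ, (∀ n, f n ∈ F) ∧ IsL1Seq f,
      -- (2) `F` is tame: no sequence of functions from `F` is independent
      ¬ ∃ f : ℕ → X → ℝ, (∀ n, f n ∈ F) ∧ IsIndependentSeq f,
      -- (3) every sequence in `F` has a pointwise convergent subsequence
      ∀ f : ℕ → X → ℝ, (∀ n, f n ∈ F) → ∃ (φ : ℕ → ℕ) (g : X → ℝ), StrictMono φ ∧
        ∀ x : X, Tendsto (fun m => f (φ m) x) atTop (nhds (g x)),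
      -- (4) every function in the pointwise closure of `F` in `ℝ^X` is fragmented
      ∀ g ∈ closure F, IsFragmentedFn g,
      -- (5) `F` is eventually fragmented
      ∀ f : ℕ → X → ℝ, (∀ n, f n ∈ F) → ∃ φ : ℕ → ℕ, StrictMono φ ∧
        IsFragmentedFamilyR (Set.range fun m => f (φ m))] := by
  obtain ⟨C, hC⟩ := hFbdd
  have h25 : (¬ ∃ f : ℕ → X → ℝ, (∀ n, f n ∈ F) ∧ IsIndependentSeq f) →
      ∀ f : ℕ → X → ℝ, (∀ n, f n ∈ F) → ∃ φ : ℕ → ℕ, StrictMono φ ∧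
        IsFragmentedFamilyR (Set.range fun m => f (φ m)) ∧
        ∃ (ψ : ℕ → ℕ) (g : X → ℝ), StrictMono ψ ∧
          ∀ x : X, Tendsto (fun m => f (φ (ψ m)) x) atTop (nhds (g x)) := by
    intro h2 f hf
    let e : X → (ℕ → ℝ) := fun x n => f n x
    have he : Continuous e := continuous_pi fun n => hFcont _ (hf n)
    have h2' : ¬ ∃ g : ℕ → X → ℝ, (∀ n, g n ∈ Set.range f) ∧ IsIndependentSeq g := by
      rintro ⟨g, hg, hi⟩
      refine h2 ⟨g, fun n => ?_, hi⟩
      obtain ⟨m, hm⟩ := hg n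
      exact hm ▸ hf m
    have hop : ∀ U : Set (ℕ → ℝ), IsOpen U → IsOpen (e ⁻¹' U) := fun U hU => hU.preimage he
    let t : TopologicalSpace X := TopologicalSpace.induced e inferInstance
    have ht : @SecondCountableTopology X t :=
      TopologicalSpace.secondCountableTopology_induced X (ℕ → ℝ) e
    have hfc : ∀ n, @Continuous X ℝ t _ (f n) := by
      intro n
      have h1 : @Continuous X (ℕ → ℝ) t _ e := continuous_induced_dom
      exact @Continuous.comp X (ℕ → ℝ) ℝ t _ _ e (fun y => y n) (continuous_apply n) h1
    obtain ⟨φ, hφ, hfr⟩ := @tame_fragmented_subseq X t ht f hfc C (fun n x => hC _ (hf n) x) h2'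
    obtain ⟨ψ, g, hψ, hg⟩ := @fragmented_convergent X t ht (fun m => f (φ m)) C
      (fun n x => hC _ (hf _) x) hfr
    refine ⟨φ, hφ, ?_, ψ, g, hψ, hg⟩
    intro A hA ε hε
    obtain ⟨O, ⟨U, hU, rfl⟩, hOA, hsm⟩ := hfr A hA ε hε
    exact ⟨e ⁻¹' U, hop U hU, hOA, hsm⟩
  tfae_have 1 → 2 := by
    rintro h1 ⟨f, hf, hi⟩
    exact h1 ⟨f, hf, indep_l1 f C (fun n x => hC _ (hf n) x) hi⟩
  tfae_have 2 → 3 := by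
    intro h2 f hf
    obtain ⟨φ, hφ, -, ψ, g, hψ, hg⟩ := h25 h2 f hf
    exact ⟨φ ∘ ψ, g, hφ.comp hψ, hg⟩
  tfae_have 3 → 1 := by
    rintro h3 ⟨f, hf, hl⟩
    obtain ⟨φ, g, hφ, hg⟩ := h3 f hf
    exact l1_not_convergent f (fun n => hFcont _ (hf n)) C (fun n x => hC _ (hf n) x) hl φ hφ g hg
  tfae_have 2 → 4 := tame_closure_fragmented F hFcont C hC
  tfae_have 4 → 2 := by
    rintro h4 ⟨f, hf, hi⟩
    obtain ⟨g, hg, hng⟩ := indep_not_closure f (fun n => hFcont _ (hf n)) hi C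
      (fun n x => hC _ (hf n) x) F hf
    exact hng (h4 g hg)
  tfae_have 2 → 5 := by
    intro h2 f hf
    obtain ⟨φ, hφ, hfr, -⟩ := h25 h2 f hf
    exact ⟨φ, hφ, hfr⟩
  tfae_have 5 → 2 := by
    rintro h5 ⟨f, hf, hi⟩
    obtain ⟨φ, hφ, hfr⟩ := h5 f hf
    exact indep_not_fragmented f (fun n => hFcont _ (hf n)) hi φ hφ hfr
  tfae_finish
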